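/- arXiv:2004.06225 — 3 statements merged into one kernel-verified Lean document; each statement's English description precedes it below -/
import Mathlib

section
/- Let C be an abelian category, ι : K ⟶ P a monomorphism, f : K ⟶ Y a morphism, and let (Q, θ : P ⟶ Q, j : Y ⟶ Q) be a pushout of ι along f, i.e. j∘f = θ∘ι and the square is cocartesian. Then: (1) for every g : P ⟶ Y with g∘ι = 0 there is a unique morphism h_g : Q ⟶ Q with h_g∘θ = θ − j∘g and h_g∘j = j; (2) h_0 = 1_Q; (3) h_{g₁+g₂} = h_{g₂}∘h_{g₁} for all g₁, g₂ : P ⟶ Y with g₁∘ι = g₂∘ι = 0; in particular every h_g is an isomorphism with inverse h_{−g}. -/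
/-!
STATEMENT 2: In an abelian category, let `(Q, θ, j)` be a pushout of a monomorphism
`ι : K ⟶ P` along `f : K ⟶ Y`.  Then:
(1) for every `g : P ⟶ Y` with `ι ≫ g = 0` there is a unique `h : Q ⟶ Q` with
    `θ ≫ h = θ - g ≫ j` and `j ≫ h = j`  (this is `h_g`);
(2) `h_0 = 𝟙 Q`;
(3) `h_{g₁+g₂} = h_{g₂} ∘ h_{g₁}`  (i.e. `h_{g₁+g₂} = h_{g₁} ≫ h_{g₂}`);
(4) in particular every `h_g` is an isomorphism with inverse `h_{-g}`.
-/

open CategoryTheory CategoryTheory.Limits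

theorem stmt2 {C : Type*} [Category C] [Abelian C] {K P Y Q : C}
    (ι : K ⟶ P) (hι : Mono ι) (f : K ⟶ Y) (θ : P ⟶ Q) (j : Y ⟶ Q)
    (hpo : IsPushout ι f θ j) :
    -- (1) existence and uniqueness of `h_g`
    (∀ g : P ⟶ Y, ι ≫ g = 0 →
      ∃! h : Q ⟶ Q, θ ≫ h = θ - g ≫ j ∧ j ≫ h = j) ∧
    -- (2) `h_0 = 𝟙 Q`
    (∀ h : Q ⟶ Q, (θ ≫ h = θ - (0 : P ⟶ Y) ≫ j ∧ j ≫ h = j) → h = 𝟙 Q) ∧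
    -- (3) `h_{g₁+g₂} = h_{g₂} ∘ h_{g₁}`
    (∀ g₁ g₂ : P ⟶ Y, ι ≫ g₁ = 0 → ι ≫ g₂ = 0 →
      ∀ h₁ h₂ h₁₂ : Q ⟶ Q,
        (θ ≫ h₁ = θ - g₁ ≫ j ∧ j ≫ h₁ = j) →
        (θ ≫ h₂ = θ - g₂ ≫ j ∧ j ≫ h₂ = j) →
        (θ ≫ h₁₂ = θ - (g₁ + g₂) ≫ j ∧ j ≫ h₁₂ = j) →
        h₁₂ = h₁ ≫ h₂) ∧
    -- (4) every `h_g` is an isomorphism with inverse `h_{-g}`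
    (∀ g : P ⟶ Y, ι ≫ g = 0 →
      ∀ h h' : Q ⟶ Q,
        (θ ≫ h = θ - g ≫ j ∧ j ≫ h = j) →
        (θ ≫ h' = θ - (-g) ≫ j ∧ j ≫ h' = j) →
        h ≫ h' = 𝟙 Q ∧ h' ≫ h = 𝟙 Q) := by
  refine ⟨?_, ?_, ?_, ?_⟩
  · intro g hg
    have w : ι ≫ (θ - g ≫ j) = f ≫ j := by
      rw [Preadditive.comp_sub, ← Category.assoc, hg, zero_comp, sub_zero, hpo.w]
    refine ⟨hpo.desc (θ - g ≫ j) j w, ⟨hpo.inl_desc _ _ _, hpo.inr_desc _ _ _⟩, ?_⟩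
    rintro h ⟨h1, h2⟩
    apply hpo.hom_ext
    · rw [h1, hpo.inl_desc]
    · rw [h2, hpo.inr_desc]
  · rintro h ⟨h1, h2⟩
    apply hpo.hom_ext
    · rw [h1, zero_comp, sub_zero, Category.comp_id]
    · rw [h2, Category.comp_id]
  · rintro g₁ g₂ - - h₁ h₂ h₁₂ ⟨a1, b1⟩ ⟨a2, b2⟩ ⟨a3, b3⟩
    apply hpo.hom_ext
    · rw [a3, ← Category.assoc, a1, Preadditive.sub_comp, a2, Category.assoc, b2,
        Preadditive.add_comp]
      abel
    · rw [b3, ← Category.assoc, b1, b2]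
  · rintro g - h h' ⟨a1, b1⟩ ⟨a2, b2⟩
    constructor
    · apply hpo.hom_ext
      · rw [← Category.assoc, a1, Preadditive.sub_comp, a2, Category.assoc, b2,
          Preadditive.neg_comp, Category.comp_id]
        abel
      · rw [← Category.assoc, b1, b2, Category.comp_id]
    · apply hpo.hom_ext
      · rw [← Category.assoc, a2, Preadditive.sub_comp, a1, Category.assoc, b1,
          Preadditive.neg_comp, Category.comp_id]
        abel
      · rw [← Category.assoc, b2, b1, Category.comp_id]
end

section
/- Let C be an abelian category and n ≥ 2. Let P₀, …, P_{n−1} be objects of C with morphisms d_i : P_{i+1} ⟶ P_i for 0 ≤ i ≤ n−3 and d_{n−2} : P_{n−1} ⟶ P_{n−2}, satisfying d_i∘d_{i+1} = 0 for all applicable i. Let ι : W ⟶ P_{n−1} be a monomorphism, f̄ : W ⟶ Y a morphism, and (Q, θ : P_{n−1} ⟶ Q, j : Y ⟶ Q) a pushout of ι along f̄. Let d_f : Q ⟶ P_{n−2} satisfy d_f∘θ = d_{n−2} and d_f∘j = 0. Let K be the ℕ-indexed chain complex with K_{n−1} = Q, K_i = P_i for 0 ≤ i ≤ n−2, K_i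 = 0 for i ≥ n, with differential d_f from degree n−1 to n−2 and the d_i in lower degrees. For g : P_{n−1} ⟶ Y with g∘ι = 0, let h_g : Q ⟶ Q be the unique morphism with h_g∘θ = θ − j∘g and h_g∘j = j, and let M(g) : K ⟶ K be the family which is h_g in degree n−1 and the identity in all other degrees. Then: (1) M(g) is a chain map; (2) if g, g' : P_{n−1} ⟶ Y satisfy g∘ι = g'∘ι = 0 and g' = g + p∘d_{n−2} for some p : P_{n−2} ⟶ Y, then M(g) and M(g') are chain homotopic, a chain homotopy being given by the family whose only nonzero component is j∘p : K_{n−2} ⟶ K_{n−1}. -/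
/-!
STATEMENT 3: Schwede's endomorphism `μ_f(g) = M(g)` of the `n`-extension complex `K(f)`
is a chain map, and its homotopy class only depends on the cohomology class of `g`.
Here `n ≥ 2` is written as `n = N + 2`, so that `n - 1 = N + 1`, `n - 2 = N`,
`n - 3 = N - 1`.  The objects `P₀, …, P_{n-1}` are `P 0, …, P (N+1)`, and the
differentials `d_i : P_{i+1} ⟶ P_i` for `0 ≤ i ≤ n - 2` are `d i _ : P (i+1) ⟶ P i`
for `i ≤ N`.
-/

open CategoryTheory CategoryTheory.Limits ZeroObject

universe v u

variable {C : Type u} [Category.{v} C] [Abelian C]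

/-- The underlying objects of the complex `K`: `K_i = P_i` for `i ≤ n-2 = N`,
`K_{n-1} = Q`, and `K_i = 0` for `i ≥ n = N + 2`. -/
noncomputable def KX (P : ℕ → C) (Q : C) (N : ℕ) (i : ℕ) : C :=
  if i ≤ N then P i else if i = N + 1 then Q else 0

lemma KX_of_le (P : ℕ → C) (Q : C) (N i : ℕ) (h : i ≤ N) : KX P Q N i = P i := by
  unfold KX; rw [if_pos h]

lemma KX_top (P : ℕ → C) (Q : C) (N i : ℕ) (h : i = N + 1) : KX P Q N i = Q := by
  unfold KX; rw [if_neg (by omega), if_pos h]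

/-- The differential of the complex `K`: the maps `d_i` in degrees `≤ n-3`,
the map `d_f : Q ⟶ P_{n-2}` from degree `n-1` to degree `n-2`, and `0` above. -/
noncomputable def KD (P : ℕ → C) (Q : C) (N : ℕ)
    (d : ∀ i, i ≤ N → (P (i + 1) ⟶ P i)) (df : Q ⟶ P N) (i : ℕ) :
    KX P Q N (i + 1) ⟶ KX P Q N i :=
  if h1 : i + 1 ≤ N then
    eqToHom (KX_of_le P Q N (i + 1) h1) ≫ d i (by omega) ≫
      eqToHom (KX_of_le P Q N i (by omega)).symm
  else if h2 : i = N then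
    eqToHom (KX_top P Q N (i + 1) (by omega)) ≫ df ≫
      eqToHom (show P N = KX P Q N i by rw [KX_of_le P Q N i (by omega), h2])
  else 0

/-- The endomorphism `M(g)` of `K`, which is `h_g` in degree `n-1 = N+1` and the
identity elsewhere. -/
noncomputable def Mg (P : ℕ → C) (Q : C) (N : ℕ) (hg : Q ⟶ Q) (i : ℕ) :
    KX P Q N i ⟶ KX P Q N i :=
  if h : i = N + 1 then
    eqToHom (KX_top P Q N i h) ≫ hg ≫ eqToHom (KX_top P Q N i h).symm
  else 𝟙 _

/-- The degree `+1` family whose only nonzero component is `p' : P_{n-2} ⟶ Q = K_{n-1}`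
in degree `n-2 = N` (in the statement, `p' = p ≫ j`). -/
noncomputable def Sp (P : ℕ → C) (Q : C) (N : ℕ) (p' : P N ⟶ Q) (i : ℕ) :
    KX P Q N i ⟶ KX P Q N (i + 1) :=
  if h : i = N then
    eqToHom (show KX P Q N i = P N by rw [KX_of_le P Q N i (by omega), h]) ≫ p' ≫
      eqToHom (KX_top P Q N (i + 1) (by omega)).symm
  else 0

theorem stmt3 (P : ℕ → C) (N : ℕ)
    (d : ∀ i, i ≤ N → (P (i + 1) ⟶ P i))
    (hdd : ∀ i (h : i + 1 ≤ N), d (i + 1) h ≫ d i (by omega) = 0)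
    {W Y Q : C} (ι : W ⟶ P (N + 1)) (hι : Mono ι) (fbar : W ⟶ Y)
    (θ : P (N + 1) ⟶ Q) (j : Y ⟶ Q) (hpo : IsPushout ι fbar θ j)
    (df : Q ⟶ P N) (hdf1 : θ ≫ df = d N (le_refl N)) (hdf2 : j ≫ df = 0) :
    -- (1) `M(g)` is a chain map
    (∀ g : P (N + 1) ⟶ Y, ι ≫ g = 0 →
      ∀ hg : Q ⟶ Q, (θ ≫ hg = θ - g ≫ j ∧ j ≫ hg = j) →
        ∀ i, Mg P Q N hg (i + 1) ≫ KD P Q N d df i = KD P Q N d df i ≫ Mg P Q N hg i) ∧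
    -- (2) if `g' = g + p ∘ d_{n-2}` then `M(g)` and `M(g')` are chain homotopic,
    -- a homotopy being the family with only nonzero component `j ∘ p : K_{n-2} → K_{n-1}`
    (∀ g g' : P (N + 1) ⟶ Y, ι ≫ g = 0 → ι ≫ g' = 0 →
      ∀ p : P N ⟶ Y, g' = g + d N (le_refl N) ≫ p →
      ∀ hg hg' : Q ⟶ Q,
        (θ ≫ hg = θ - g ≫ j ∧ j ≫ hg = j) →
        (θ ≫ hg' = θ - g' ≫ j ∧ j ≫ hg' = j) →
        (Mg P Q N hg 0 - Mg P Q N hg' 0 = Sp P Q N (p ≫ j) 0 ≫ KD P Q N d df 0) ∧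
        (∀ i, Mg P Q N hg (i + 1) - Mg P Q N hg' (i + 1) =
          Sp P Q N (p ≫ j) (i + 1) ≫ KD P Q N d df (i + 1) +
          KD P Q N d df i ≫ Sp P Q N (p ≫ j) i)) := by
  refine ⟨?_, ?_⟩
  · rintro g - hg ⟨h1, h2⟩ i
    have key : hg ≫ df = df := by
      apply hpo.hom_ext
      · rw [← Category.assoc, h1, Preadditive.sub_comp, Category.assoc, hdf2, comp_zero, sub_zero]
      · rw [← Category.assoc, h2]
    by_cases hi : i = N
    · subst hi
      simp [Mg, KD, reassoc_of% key]
    · by_cases hi2 : i = N + 1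
      · subst hi2
        simp [KD]
      · simp [Mg, hi, hi2]
  · rintro g g' - - p rfl hg hg' ⟨h1, h2⟩ ⟨h3, h4⟩
    have key : hg - hg' = df ≫ p ≫ j := by
      apply hpo.hom_ext
      · rw [Preadditive.comp_sub, h1, h3, reassoc_of% hdf1]
        simp
      · rw [Preadditive.comp_sub, h2, h4, reassoc_of% hdf2]
        simp
    have hSD : ∀ i, Sp P Q N (p ≫ j) i ≫ KD P Q N d df i = 0 := by
      intro i
      by_cases hi : i = N
      · subst hi
        simp [Sp, KD, reassoc_of% hdf2]
      · simp [Sp, hi]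
    refine ⟨?_, fun i => ?_⟩
    · rw [hSD]
      simp [Mg]
    · rw [hSD, zero_add]
      by_cases hi : i = N
      · subst hi
        have e : hg = hg' + df ≫ p ≫ j := by rw [← key]; abel
        simp [Mg, Sp, KD, e]
      · simp [Mg, Sp, hi]
end

section
/- Let C be an additive category with biproducts, let X and P₀ be objects and μ : P₀ ⟶ X a morphism. Consider the commutative square with: top map (0, μ) : X ⊞ P₀ ⟶ X; right map the diagonal (1,1)ᵗ : X ⟶ X ⊞ X; left map X ⊞ P₀ ⟶ X ⊞ X ⊞ P₀ given by the matrix with rows (1,0), (−1,μ), (0,1); and bottom map X ⊞ X ⊞ P₀ ⟶ X ⊞ X given by the matrix with rows (1,1,0), (0,0,μ). This square is a pullback square. -/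
/-!
STATEMENT 4: In an additive category with biproducts, the square

      X ⊞ P₀ --(0, μ)--> X
        |                 |
 (rows (1,0),(−1,μ),(0,1))|  (1,1)ᵗ
        v                 v
  X ⊞ X ⊞ P₀ --rows (1,1,0),(0,0,μ)--> X ⊞ X

is a pullback square.
-/

open CategoryTheory CategoryTheory.Limits

theorem stmt4 {C : Type*} [Category C] [Preadditive C] [HasBinaryBiproducts C]
    (X P₀ : C) (μ : P₀ ⟶ X) :
    IsPullback
      -- top map `(0, μ) : X ⊞ P₀ ⟶ X`
      (biprod.desc (0 : X ⟶ X) μ)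
      -- left map `X ⊞ P₀ ⟶ X ⊞ (X ⊞ P₀)`, matrix rows `(1,0), (−1,μ), (0,1)`
      (biprod.lift (biprod.desc (𝟙 X) 0)
        (biprod.lift (biprod.desc (-(𝟙 X)) μ) (biprod.desc 0 (𝟙 P₀))))
      -- right map: the diagonal `X ⟶ X ⊞ X`
      (biprod.lift (𝟙 X) (𝟙 X))
      -- bottom map `X ⊞ (X ⊞ P₀) ⟶ X ⊞ X`, matrix rows `(1,1,0), (0,0,μ)`
      (biprod.lift (biprod.desc (𝟙 X) (biprod.desc (𝟙 X) 0))
        (biprod.desc 0 (biprod.desc 0 μ))) := by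
  refine ⟨⟨?_⟩, ⟨PullbackCone.IsLimit.mk _
    (fun s => biprod.lift (s.snd ≫ biprod.fst) (s.snd ≫ biprod.snd ≫ biprod.snd)) ?_ ?_ ?_⟩⟩
  · ext <;> simp
  · intro s
    have h2 := s.condition =≫ biprod.snd
    simp [biprod.desc_eq] at h2
    simp [biprod.desc_eq, h2]
  · intro s
    have h1 := s.condition =≫ biprod.fst
    have h2 := s.condition =≫ biprod.snd
    simp [biprod.desc_eq] at h1 h2
    have h3 := h2.symm.trans h1
    ext
    · simp [biprod.desc_eq]
    · simp [biprod.desc_eq, h3]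
    · simp [biprod.desc_eq]
  · intro s m _ hm
    rw [← hm]
    ext <;> simp [biprod.desc_eq]
end
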